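/- Let C be a field of characteristic zero, V a C-vector space, ∂ a C-linear endomorphism of V, and k ≥ 1, N ≥ 1. Let elements v_{m_0,…,m_k} ∈ V be given, indexed by the tuples (m_0,…,m_k) ∈ {0,…,N}^{k+1} whose non-increasing rearrangement (μ_0,…,μ_k) satisfies μ_0 − μ_1 = 1. Then the equation Σ_{(m_0,…,m_k)} Λ₀^{m_0}(λ_1^{m_1}⋯λ_k^{m_k} ⊗ v_{m_0,…,m_k}) = 0 holds in C[λ_1,…,λ_k] ⊗_C V if and only if the following two conditions hold: (i) v_{m′_0,…,m′_k} = v_{m_0,…,m_k} whenever (m′_0,…,m′_k) is obtained from (m_0,…,m_k) by transposing an entry m_i = μ_0 with an entry m_j = μ_1; (ii) defining, for each tuple (n_0,…,n_k) ∈ {0,…,N−1}^{k+1} whose two largest entries are equal (ν_0 = ν_1), the element w_{n_0,…,n_k} := v_{m_0,…,m_k} where (m_0,…,m_k) is obtained from (n_0,…,n_k) by adding 1 to one maximal entry (well defined by (i)), one has ∂w_{n_0,…,n_k} + Σ_{h=0}^k w_{n_0,…,n_h−1,…,n_k} = 0 for all such tuples, where the summand w_{n_0,…,n_h−1,…,n_k}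 is interpreted as 0 unless n_h ≥ 1 and the two largest entries of (n_0,…,n_h−1,…,n_k) are equal. In particular, if ∂ is injective, then the equation has only the zero solution v ≡ 0. -/

import Mathlib

/-- A tuple `(m_0,…,m_k)` of natural numbers whose non-increasing rearrangement
`(μ_0,…,μ_k)` satisfies `μ_0 − μ_1 = 1`. -/
def gapOne (k : ℕ) (m : Fin (k + 1) → ℕ) : Prop :=
  ∃ σ : Equiv.Perm (Fin (k + 1)), Antitone (fun j => m (σ j)) ∧ m (σ 0) = m (σ 1) + 1

/-- A tuple `(n_0,…,n_k)` of natural numbers whose two largest entries are equal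
(`ν_0 = ν_1`). -/
def twoMaxEq (k : ℕ) (m : Fin (k + 1) → ℕ) : Prop :=
  ∃ σ : Equiv.Perm (Fin (k + 1)), Antitone (fun j => m (σ j)) ∧ m (σ 0) = m (σ 1)

/-- We represent polynomials in `λ_1,…,λ_k` with coefficients in `V`
(i.e. elements of `C[λ_1,…,λ_k] ⊗_C V`) as finitely supported functions
`(Fin k →₀ ℕ) →₀ V` from monomials to coefficients.
`Λ₀(Q) = −(λ_1+⋯+λ_k)·Q − ∂̂(Q)`, where `∂̂` applies `D` to the coefficients and the
multiplication by `λ_a` shifts the exponents. -/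
noncomputable def vLamZero {C V : Type*} [Field C] [AddCommGroup V] [Module C V]
    (D : V →ₗ[C] V) (k : ℕ) (Q : (Fin k →₀ ℕ) →₀ V) : (Fin k →₀ ℕ) →₀ V :=
  -(∑ a : Fin k, Finsupp.mapDomain (· + Finsupp.single a 1) Q)
    - Finsupp.mapRange (⇑D) D.map_zero Q

open scoped Classical in
/-- The left-hand side `Σ_{(m_0,…,m_k)} Λ₀^{m_0} (λ_1^{m_1}⋯λ_k^{m_k} ⊗ v_{m_0,…,m_k})`,
the sum ranging over the tuples `(m_0,…,m_k) ∈ {0,…,N}^{k+1}` whose non-increasing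
rearrangement satisfies `μ_0 − μ_1 = 1`. -/
noncomputable def eqnLHS {C V : Type*} [Field C] [AddCommGroup V] [Module C V]
    (D : V →ₗ[C] V) (k N : ℕ) (v : (Fin (k + 1) → ℕ) → V) : (Fin k →₀ ℕ) →₀ V :=
  ∑ m : Fin (k + 1) → Fin (N + 1),
    if gapOne k (fun j => (m j : ℕ)) then
      (vLamZero D k)^[(m 0 : ℕ)]
        (Finsupp.single (Finsupp.equivFunOnFinite.symm fun a : Fin k => (m a.succ : ℕ))
          (v fun j => (m j : ℕ)))
    else 0

/-!
Let `P = ∑ λ_0^{m_0} ⋯ λ_k^{m_k} ⊗ v_m`. The left-hand side of the equation is `P` with `Λ₀`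
substituted for `λ_0`, so it vanishes iff `P = (λ_0 + ⋯ + λ_k + ∂̂) Q` for some polynomial `Q`, with
coefficients `q_n` say. Write `e_i` for the `i`-th unit tuple. If `n` has its strict maximum at `i`,
then `P` has no term at `n + e_i`, and descending induction on the maximum of `n` gives `q_n = 0`.
Hence, for any position `i` of a maximal entry of `n`, comparing coefficients at `n + e_i` reads
`v_{n + e_i} = q_n` (or `0 = q_n`, outside the index set), while the tuples with two equal largest
entries give condition (ii) with `w = q`. If `∂` is injective, the latter forces `q = 0` by
induction on `n`.
-/

section StrictArgmax

variable {ι : Type*} {n : ι → ℕ} {i h : ι}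

/-- The tuple `n` attains its maximum at `i` and nowhere else. -/
def IsStrictArgmax (n : ι → ℕ) (i : ι) : Prop := ∀ r, r ≠ i → n r < n i

lemma IsStrictArgmax.le (hn : IsStrictArgmax n i) (r : ι) : n r ≤ n i := by
  obtain rfl | hr := eq_or_ne r i
  exacts [le_rfl, (hn r hr).le]

lemma IsStrictArgmax.eq_of_forall_le (hn : IsStrictArgmax n i) (hh : ∀ r, n r ≤ n h) : h = i := by
  by_contra hne
  exact (hn h hne).not_ge (hh i)

variable [DecidableEq ι]

lemma isStrictArgmax_update_succ (hi : ∀ r, n r ≤ n i) :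
    IsStrictArgmax (Function.update n i (n i + 1)) i := by
  intro r hr
  simpa [hr, Nat.lt_succ_iff] using hi r

lemma IsStrictArgmax.update_pred (hn : IsStrictArgmax n i) (hne : h ≠ i) :
    IsStrictArgmax (Function.update n h (n h - 1)) i := by
  intro r hr
  rw [Function.update_of_ne hne.symm, Function.update_apply]
  split_ifs
  exacts [(Nat.sub_le _ _).trans_lt (hn h hne), hn r hr]

lemma IsStrictArgmax.exists_eq_update_succ [Nontrivial ι] (hn : IsStrictArgmax n i) :
    ∃ n' : ι → ℕ, (∀ r, n' r ≤ n' i) ∧ n = Function.update n' i (n' i + 1) := by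
  obtain ⟨s, hs⟩ := exists_ne i
  have hpos : n i - 1 + 1 = n i := Nat.sub_add_cancel ((Nat.zero_le _).trans_lt (hn s hs))
  refine ⟨Function.update n i (n i - 1), fun r => ?_, by simp [hpos]⟩
  obtain rfl | hr := eq_or_ne r i
  · exact le_rfl
  · simpa [hr] using Nat.le_sub_one_of_lt (hn r hr)

end StrictArgmax

lemma update_comp_swap_of_eq {ι α : Type*} [DecidableEq ι] {n : ι → α} {i j : ι}
    (hij : n i = n j) (x : α) :
    Function.update n i x ∘ Equiv.swap i j = Function.update n j x := by
  rw [Function.update_comp_equiv, Equiv.symm_swap, Equiv.swap_apply_left,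
    Equiv.comp_swap_eq_update, hij, Function.update_eq_self, ← hij, Function.update_eq_self]

section SortedTuples

variable {k : ℕ}

lemma exists_perm_antitone {α : Type*} [LinearOrder α] {l : ℕ} (n : Fin l → α) :
    ∃ σ : Equiv.Perm (Fin l), Antitone fun j => n (σ j) :=
  ⟨Tuple.sort (OrderDual.toDual ∘ n), Tuple.monotone_sort (OrderDual.toDual ∘ n)⟩

lemma le_apply_zero_of_antitone {α : Type*} [Preorder α] {n : Fin (k + 1) → α}
    {σ : Equiv.Perm (Fin (k + 1))} (hσ : Antitone fun j => n (σ j)) (r : Fin (k + 1)) :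
    n r ≤ n (σ 0) := by
  simpa using hσ (Fin.zero_le (σ.symm r))

lemma le_apply_one_of_antitone {α : Type*} [Preorder α] {n : Fin (k + 2) → α}
    {σ : Equiv.Perm (Fin (k + 2))} (hσ : Antitone fun j => n (σ j)) {r : Fin (k + 2)}
    (hr : r ≠ σ 0) : n r ≤ n (σ 1) := by
  have hr' : σ.symm r ≠ 0 := fun h0 => hr ((Equiv.symm_apply_eq σ).1 h0)
  simpa using hσ (Fin.one_le_of_ne_zero hr')

lemma exists_perm_antitone_and_iff {α : Type*} [LinearOrder α] (R : α → α → Prop)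
    (n : Fin (k + 2) → α) :
    (∃ σ : Equiv.Perm (Fin (k + 2)), Antitone (fun j => n (σ j)) ∧ R (n (σ 0)) (n (σ 1))) ↔
      ∃ i j, i ≠ j ∧ (∀ r, n r ≤ n i) ∧ (∀ r, r ≠ i → n r ≤ n j) ∧ R (n i) (n j) := by
  constructor
  · rintro ⟨σ, hσ, hR⟩
    exact ⟨σ 0, σ 1, σ.injective.ne Fin.zero_ne_one, le_apply_zero_of_antitone hσ,
      fun r => le_apply_one_of_antitone hσ, hR⟩
  · rintro ⟨i, j, hij, hi, hj, hR⟩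
    obtain ⟨σ, hσ⟩ := exists_perm_antitone n
    have h0 : n (σ 0) = n i := le_antisymm (hi _) (le_apply_zero_of_antitone hσ i)
    have h1 : n (σ 1) = n j := by
      apply le_antisymm
      · by_cases h1i : σ 1 = i
        · have h0i : σ 0 ≠ i := fun h0i => Fin.zero_ne_one (σ.injective (h0i.trans h1i.symm))
          exact (le_apply_zero_of_antitone hσ _).trans (hj _ h0i)
        · exact hj _ h1i
      · by_cases hj0 : j = σ 0
        · exact (hi j).trans (le_apply_one_of_antitone hσ fun hi0 => hij (hi0.trans hj0.symm))
        · exact le_apply_one_of_antitone hσ hj0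
    exact ⟨σ, hσ, by rwa [h0, h1]⟩

lemma twoMaxEq_iff_forall_not_isStrictArgmax {n : Fin (k + 2) → ℕ} :
    twoMaxEq (k + 1) n ↔ ∀ i, ¬ IsStrictArgmax n i := by
  rw [twoMaxEq, exists_perm_antitone_and_iff (· = ·)]
  constructor
  · rintro ⟨a, b, hab, ha, -, heq⟩ i hi
    obtain rfl := hi.eq_of_forall_le ha
    exact (hi b hab.symm).ne' heq
  · intro hn
    obtain ⟨i, hi⟩ := Finite.exists_max n
    obtain ⟨j, hji, hij⟩ : ∃ j, j ≠ i ∧ n i ≤ n j := by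
      simpa [IsStrictArgmax] using hn i
    exact ⟨i, j, hji.symm, hi, fun r _ => (hi r).trans hij, le_antisymm hij (hi j)⟩

lemma twoMaxEq_or_exists_isStrictArgmax (n : Fin (k + 2) → ℕ) :
    twoMaxEq (k + 1) n ∨ ∃ i, IsStrictArgmax n i := by
  rw [twoMaxEq_iff_forall_not_isStrictArgmax, ← not_exists]
  exact (em _).symm

lemma gapOne_iff {n : Fin (k + 2) → ℕ} :
    gapOne (k + 1) n ↔ ∃ i j, n i = n j + 1 ∧ ∀ r, r ≠ i → n r ≤ n j := by
  rw [gapOne, exists_perm_antitone_and_iff (fun x y => x = y + 1)]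
  constructor
  · rintro ⟨i, j, -, -, hj, heq⟩
    exact ⟨i, j, heq, hj⟩
  · rintro ⟨i, j, heq, hj⟩
    have hi : IsStrictArgmax n i := fun r hr => by grind
    exact ⟨i, j, fun hij => by grind, hi.le, hj, heq⟩

lemma gapOne.exists_isStrictArgmax {n : Fin (k + 2) → ℕ} (hn : gapOne (k + 1) n) :
    ∃ i, IsStrictArgmax n i := by
  obtain ⟨i, j, heq, hj⟩ := gapOne_iff.1 hn
  exact ⟨i, fun r hr => (hj r hr).trans_lt (heq ▸ Nat.lt_succ_self _)⟩

lemma twoMaxEq.not_gapOne {n : Fin (k + 2) → ℕ} (hn : twoMaxEq (k + 1) n) :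
    ¬ gapOne (k + 1) n := fun hg =>
  hg.exists_isStrictArgmax.elim (twoMaxEq_iff_forall_not_isStrictArgmax.1 hn)

lemma gapOne_update_succ_iff {n : Fin (k + 2) → ℕ} {i : Fin (k + 2)} (hi : ∀ r, n r ≤ n i) :
    gapOne (k + 1) (Function.update n i (n i + 1)) ↔ twoMaxEq (k + 1) n := by
  have hmax := isStrictArgmax_update_succ hi
  rw [gapOne_iff, twoMaxEq_iff_forall_not_isStrictArgmax]
  constructor
  · rintro ⟨a, b, heq, hb⟩ c hc
    obtain rfl := hc.eq_of_forall_le hi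
    have ha : a = i := hmax.eq_of_forall_le fun r => by grind
    subst ha
    have hba : b ≠ a := by rintro rfl; simp at heq
    have hlt : n b < n a := hc b hba
    simp only [Function.update_self, Function.update_of_ne hba] at heq
    omega
  · intro hn
    obtain ⟨j, hji, hij⟩ : ∃ j, j ≠ i ∧ n i ≤ n j := by
      simpa [IsStrictArgmax] using hn i
    refine ⟨i, j, ?_, fun r hr => ?_⟩
    · simpa [hji] using le_antisymm hij (hi j)
    · simpa [hji, hr] using (hi r).trans hij

lemma gapOne.exists_eq_update_succ {m : Fin (k + 2) → ℕ} (hm : gapOne (k + 1) m)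
    {i : Fin (k + 2)} (hi : ∀ r, m r ≤ m i) :
    ∃ n : Fin (k + 2) → ℕ, (∀ r, n r ≤ n i) ∧ twoMaxEq (k + 1) n ∧
      m = Function.update n i (n i + 1) := by
  obtain ⟨i', hi'⟩ := hm.exists_isStrictArgmax
  obtain rfl := hi'.eq_of_forall_le hi
  obtain ⟨n, hn, rfl⟩ := hi'.exists_eq_update_succ
  exact ⟨n, hn, (gapOne_update_succ_iff hn).1 hm, rfl⟩

lemma forall_update_succ_le_iff {ι : Type*} [DecidableEq ι] {n : ι → ℕ} {i : ι} {N : ℕ}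
    (hi : ∀ r, n r ≤ n i) :
    (∀ j, Function.update n i (n i + 1) j ≤ N) ↔ ∀ j, n j < N := by
  constructor
  · intro hle j
    exact (Nat.lt_succ_of_le (hi j)).trans_le (by simpa using hle i)
  · intro hlt j
    exact ((isStrictArgmax_update_succ hi).le j).trans (by simpa using hlt i)

lemma twoMaxEq.forall_lt_of_update_pred {n : Fin (k + 2) → ℕ} (hn : twoMaxEq (k + 1) n)
    {h : Fin (k + 2)} {N : ℕ} (hN : ∀ j, Function.update n h (n h - 1) j < N) (j : Fin (k + 2)) :
    n j < N := by
  obtain ⟨i, hi, hih⟩ : ∃ i, n h ≤ n i ∧ i ≠ h := by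
    have hnot := twoMaxEq_iff_forall_not_isStrictArgmax.1 hn h
    simp only [IsStrictArgmax, not_forall, not_lt] at hnot
    obtain ⟨i, hih, hi⟩ := hnot
    exact ⟨i, hi, hih⟩
  obtain rfl | hj := eq_or_ne j h
  · exact hi.trans_lt (by simpa [hih] using hN i)
  · simpa [hj] using hN j

/-- The relation `w_n = v_m` of condition (ii): for every `n ∈ {0,…,N-1}^{k+1}` with `ν_0 = ν_1`,
the element `w_n` equals `v_m` for each `m` obtained from `n` by adding `1` to a maximal entry. -/
def IsLoweredFamily {V : Type*} (N : ℕ) (v w : (Fin (k + 1) → ℕ) → V) : Prop :=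
  ∀ n : Fin (k + 1) → ℕ, (∀ j, n j < N) → twoMaxEq k n →
    ∀ i, (∀ r, n r ≤ n i) → w n = v (Function.update n i (n i + 1))

lemma IsLoweredFamily.apply_comp_swap_eq {V : Type*} {N : ℕ} {v w : (Fin (k + 2) → ℕ) → V}
    (hw : IsLoweredFamily N v w) {m : Fin (k + 2) → ℕ} (hN : ∀ j, m j ≤ N)
    (hm : gapOne (k + 1) m) {i j : Fin (k + 2)} (hi : ∀ r, m r ≤ m i) (hij : m i = m j + 1) :
    v (m ∘ Equiv.swap i j) = v m := by
  obtain ⟨n, hni, hn, rfl⟩ := hm.exists_eq_update_succ hi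
  have hlt := (forall_update_succ_le_iff hni).1 hN
  have hji : j ≠ i := by rintro rfl; simp at hij
  have heq : n i = n j := by simpa [hji] using hij
  rw [update_comp_swap_of_eq heq, ← hw n hlt hn i hni]
  simpa only [heq] using (hw n hlt hn j fun r => heq ▸ hni r).symm

end SortedTuples

section Coefficients

variable {R V ι : Type*} [Semiring R] [AddCommMonoid V] [Module R V] [Fintype ι] [DecidableEq ι]

/-- The coefficient at the monomial `λ^n` of `(∑ h, λ_h + ∂̂) Q`, where `q` is the family of
coefficients of `Q`. -/
def sumXAddCoeff (D : V →ₗ[R] V) (q : (ι → ℕ) → V) (n : ι → ℕ) : V :=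
  D (q n) + ∑ h, if 1 ≤ n h then q (Function.update n h (n h - 1)) else 0

variable {D : V →ₗ[R] V} {q : (ι → ℕ) → V}

lemma sumXAddCoeff_update_succ {n : ι → ℕ} {i : ι} (hi : q (Function.update n i (n i + 1)) = 0)
    (hne : ∀ h, h ≠ i → q (Function.update (Function.update n i (n i + 1)) h (n h - 1)) = 0) :
    sumXAddCoeff D q (Function.update n i (n i + 1)) = q n := by
  rw [sumXAddCoeff, hi, map_zero, zero_add, Finset.sum_eq_single i]
  · simp
  · intro h _ hh
    simp [hh, hne h hh]
  · simp

-- Among the tuples entering the coefficient at `n + e_i`, only `n` has a smaller maximum.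
lemma eq_zero_of_isStrictArgmax_of_sumXAddCoeff_update_succ (hq : q.support.Finite)
    (h0 : ∀ n i, IsStrictArgmax n i → sumXAddCoeff D q (Function.update n i (n i + 1)) = 0)
    {n : ι → ℕ} {i : ι} (hn : IsStrictArgmax n i) : q n = 0 := by
  by_contra hqn
  let S : Set ((ι → ℕ) × ι) := {p | IsStrictArgmax p.1 p.2 ∧ q p.1 ≠ 0}
  have hS : S.Finite := (hq.prod Set.finite_univ).subset fun p hp => ⟨hp.2, Set.mem_univ _⟩
  obtain ⟨⟨m, j⟩, ⟨hm, hqm⟩, hmax⟩ := hS.exists_maximalFor (fun p => p.1 p.2) S ⟨(n, i), hn, hqn⟩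
  have hzero : ∀ m', IsStrictArgmax m' j → m' j = m j + 1 → q m' = 0 := by
    intro m' hm' heq
    by_contra hqm'
    have hle : m' j ≤ m j := hmax (j := (m', j)) ⟨hm', hqm'⟩ (by simp [heq])
    omega
  have hup := isStrictArgmax_update_succ hm.le
  refine hqm ?_
  rw [← h0 m j hm, sumXAddCoeff_update_succ (hzero _ hup (by simp))]
  intro h hh
  refine hzero _ ?_ (by simp [hh.symm])
  simpa [hh] using hup.update_pred hh

lemma eq_zero_of_injective_of_sumXAddCoeff_eq_zero (hD : Function.Injective D)
    (h0 : ∀ n, q n ≠ 0 → sumXAddCoeff D q n = 0) (n : ι → ℕ) : q n = 0 := by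
  induction n using WellFoundedLT.induction with
  | ind n ih =>
  by_contra hqn
  have hcoeff := h0 n hqn
  rw [sumXAddCoeff, Finset.sum_eq_zero, add_zero] at hcoeff
  · exact hqn (hD (by rw [hcoeff, map_zero]))
  · intro h _
    split_ifs with hh
    · exact ih _ (update_lt_self_iff.2 (by omega))
    · rfl

end Coefficients

section TruncatedFamilies

variable {V : Type*} [Zero V] {k N : ℕ}

open scoped Classical in
/-- The coefficients of the polynomial `∑ λ_0^{m_0} ⋯ λ_k^{m_k} ⊗ v_m`, the sum ranging over the
tuples `m ∈ {0,…,N}^{k+1}` with `μ_0 - μ_1 = 1`. -/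
noncomputable def gapOneCoeff (N : ℕ) (v : (Fin (k + 1) → ℕ) → V)
    (m : Fin (k + 1) → ℕ) : V :=
  if gapOne k m ∧ ∀ j, m j ≤ N then v m else 0

open scoped Classical in
/-- The family `w` restricted to the tuples `n ∈ {0,…,N-1}^{k+1}` with `ν_0 = ν_1` and extended
by zero. -/
noncomputable def twoMaxCoeff (N : ℕ) (w : (Fin (k + 1) → ℕ) → V)
    (n : Fin (k + 1) → ℕ) : V :=
  if twoMaxEq k n ∧ ∀ j, n j < N then w n else 0

lemma twoMaxCoeff_of_twoMaxEq {w : (Fin (k + 1) → ℕ) → V} {n : Fin (k + 1) → ℕ}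
    (hn : twoMaxEq k n) (hN : ∀ j, n j < N) : twoMaxCoeff N w n = w n :=
  if_pos ⟨hn, hN⟩

lemma finite_support_twoMaxCoeff {w : (Fin (k + 1) → ℕ) → V} :
    (twoMaxCoeff N w).support.Finite := by
  refine (Set.finite_Iic fun _ => N).subset fun n hn j => ?_
  by_contra hj
  exact hn (if_neg fun h => hj (h.2 j).le)

variable {v w : (Fin (k + 2) → ℕ) → V}

lemma twoMaxCoeff_of_isStrictArgmax {n : Fin (k + 2) → ℕ} {i : Fin (k + 2)}
    (hn : IsStrictArgmax n i) : twoMaxCoeff N w n = 0 :=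
  if_neg fun h => twoMaxEq_iff_forall_not_isStrictArgmax.1 h.1 i hn

lemma gapOneCoeff_of_twoMaxEq {n : Fin (k + 2) → ℕ} (hn : twoMaxEq (k + 1) n) :
    gapOneCoeff N v n = 0 :=
  if_neg fun h => hn.not_gapOne h.1

lemma gapOneCoeff_update_succ {n : Fin (k + 2) → ℕ} {i : Fin (k + 2)} (hi : ∀ r, n r ≤ n i) :
    gapOneCoeff N v (Function.update n i (n i + 1)) =
      twoMaxCoeff N (fun n => v (Function.update n i (n i + 1))) n := by
  classical
  exact if_congr (and_congr (gapOne_update_succ_iff hi) (forall_update_succ_le_iff hi)) rfl rfl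

end TruncatedFamilies

section Quotient

variable {R V : Type*} [Semiring R] [AddCommMonoid V] [Module R V] {D : V →ₗ[R] V} {k N : ℕ}
  {v q w : (Fin (k + 2) → ℕ) → V}

lemma sumXAddCoeff_twoMaxCoeff_update_succ {n : Fin (k + 2) → ℕ} {i : Fin (k + 2)}
    (hi : ∀ r, n r ≤ n i) :
    sumXAddCoeff D (twoMaxCoeff N w) (Function.update n i (n i + 1)) = twoMaxCoeff N w n := by
  have hup := isStrictArgmax_update_succ hi
  refine sumXAddCoeff_update_succ (twoMaxCoeff_of_isStrictArgmax hup) fun h hh =>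
    twoMaxCoeff_of_isStrictArgmax (i := i) ?_
  simpa [hh] using hup.update_pred hh

lemma sumXAddCoeff_twoMaxCoeff_of_not_forall_lt {n : Fin (k + 2) → ℕ} (hn : twoMaxEq (k + 1) n)
    (hN : ¬ ∀ j, n j < N) : sumXAddCoeff D (twoMaxCoeff N w) n = 0 := by
  rw [sumXAddCoeff, twoMaxCoeff, if_neg fun h => hN h.2, map_zero, zero_add]
  refine Finset.sum_eq_zero fun h _ => ite_eq_right_iff.2 fun _ => if_neg fun hlow => ?_
  exact hN (hn.forall_lt_of_update_pred hlow.2)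

open scoped Classical in
lemma sumXAddCoeff_twoMaxCoeff_of_forall_lt {n : Fin (k + 2) → ℕ} (hn : twoMaxEq (k + 1) n)
    (hN : ∀ j, n j < N) :
    sumXAddCoeff D (twoMaxCoeff N w) n = D (w n) + ∑ h : Fin (k + 2),
      if 1 ≤ n h ∧ twoMaxEq (k + 1) (Function.update n h (n h - 1))
        then w (Function.update n h (n h - 1)) else 0 := by
  rw [sumXAddCoeff, twoMaxCoeff_of_twoMaxEq hn hN]
  congr 1
  refine Finset.sum_congr rfl fun h _ => ?_
  have hlow : ∀ j, Function.update n h (n h - 1) j < N := fun j =>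
    (update_le_self_iff.2 (Nat.sub_le _ _) j).trans_lt (hN j)
  simp only [twoMaxCoeff, hlow, implies_true, and_true, ite_and]

lemma eq_twoMaxCoeff_of_sumXAddCoeff_eq (hq : q.support.Finite)
    (hqv : ∀ n, sumXAddCoeff D q n = gapOneCoeff N v n) {n : Fin (k + 2) → ℕ} {i : Fin (k + 2)}
    (hi : ∀ r, n r ≤ n i) :
    q n = twoMaxCoeff N (fun n => v (Function.update n i (n i + 1))) n := by
  have hzero : ∀ {n i}, IsStrictArgmax n i → q n = 0 :=
    eq_zero_of_isStrictArgmax_of_sumXAddCoeff_update_succ (D := D) hq fun n i hn => by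
      rw [hqv, gapOneCoeff_update_succ hn.le, twoMaxCoeff_of_isStrictArgmax hn]
  have hup := isStrictArgmax_update_succ hi
  rw [← gapOneCoeff_update_succ hi, ← hqv, sumXAddCoeff_update_succ (hzero hup)]
  intro h hh
  refine hzero (i := i) ?_
  simpa [hh] using hup.update_pred hh

lemma sumXAddCoeff_twoMaxCoeff_eq
    (hw : IsLoweredFamily N v w)
    (h0 : ∀ n : Fin (k + 2) → ℕ, (∀ j, n j < N) → twoMaxEq (k + 1) n →
      sumXAddCoeff D (twoMaxCoeff N w) n = 0) (n : Fin (k + 2) → ℕ) :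
    sumXAddCoeff D (twoMaxCoeff N w) n = gapOneCoeff N v n := by
  obtain hn | ⟨i, hi⟩ := twoMaxEq_or_exists_isStrictArgmax n
  · rw [gapOneCoeff_of_twoMaxEq hn]
    by_cases hN : ∀ j, n j < N
    exacts [h0 n hN hn, sumXAddCoeff_twoMaxCoeff_of_not_forall_lt hn hN]
  · obtain ⟨n, hn, rfl⟩ := hi.exists_eq_update_succ
    rw [sumXAddCoeff_twoMaxCoeff_update_succ hn, gapOneCoeff_update_succ hn]
    unfold twoMaxCoeff
    split_ifs with h
    exacts [hw n h.2 h.1 i hn, rfl]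

lemma exists_finite_support_sumXAddCoeff_eq_iff :
    (∃ q : (Fin (k + 2) → ℕ) → V, q.support.Finite ∧
        ∀ n, sumXAddCoeff D q n = gapOneCoeff N v n) ↔
      ∃ w : (Fin (k + 2) → ℕ) → V, IsLoweredFamily N v w ∧
        ∀ n : Fin (k + 2) → ℕ, (∀ j, n j < N) → twoMaxEq (k + 1) n →
          sumXAddCoeff D (twoMaxCoeff N w) n = 0 := by
  constructor
  · rintro ⟨q, hq, hqv⟩
    have hraise := fun {n i} => eq_twoMaxCoeff_of_sumXAddCoeff_eq (n := n) (i := i) hq hqv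
    have hself : twoMaxCoeff N q = q := by
      funext n
      obtain ⟨i, hi⟩ := Finite.exists_max n
      rw [twoMaxCoeff, hraise hi, twoMaxCoeff]
      split_ifs <;> rfl
    refine ⟨q, fun n hN hn i hi => ?_, fun n _ hn => ?_⟩
    · rw [hraise hi, twoMaxCoeff_of_twoMaxEq hn hN]
    · rw [hself, hqv, gapOneCoeff_of_twoMaxEq hn]
  · rintro ⟨w, hw, h0⟩
    exact ⟨twoMaxCoeff N w, finite_support_twoMaxCoeff, sumXAddCoeff_twoMaxCoeff_eq hw h0⟩

lemma IsLoweredFamily.eq_zero_of_injective (hw : IsLoweredFamily N v w)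
    (h0 : ∀ n : Fin (k + 2) → ℕ, (∀ j, n j < N) → twoMaxEq (k + 1) n →
      sumXAddCoeff D (twoMaxCoeff N w) n = 0)
    (hD : Function.Injective D) {m : Fin (k + 2) → ℕ} (hN : ∀ j, m j ≤ N)
    (hm : gapOne (k + 1) m) : v m = 0 := by
  obtain ⟨i, hi⟩ := Finite.exists_max m
  obtain ⟨n, hni, hn, rfl⟩ := hm.exists_eq_update_succ hi
  have hlt := (forall_update_succ_le_iff hni).1 hN
  rw [← hw n hlt hn i hni, ← twoMaxCoeff_of_twoMaxEq (w := w) hn hlt]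
  refine eq_zero_of_injective_of_sumXAddCoeff_eq_zero hD (fun n' hn' => ?_) n
  have hn'' := of_not_not fun hnot => hn' (if_neg hnot)
  exact h0 n' hn''.2 hn''.1

end Quotient

section Operators

variable {R V : Type*} [Semiring R] [AddCommMonoid V] [Module R V] (D : V →ₗ[R] V) {k : ℕ}

/-- The operator `Q ↦ (∑ h, λ_h) Q + ∂̂ Q` on polynomials in the variables `λ_h`, `h : σ`, with
coefficients in `V`; in the variables `λ_1,…,λ_k` it is `-Λ₀`. -/
noncomputable def sumXAdd (σ : Type*) [Fintype σ] : Module.End R ((σ →₀ ℕ) →₀ V) :=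
  ∑ h : σ, Finsupp.lmapDomain V R (· + Finsupp.single h 1) + Finsupp.mapRange.linearMap D

lemma sumXAdd_single {σ : Type*} [Fintype σ] (n : σ →₀ ℕ) (x : V) :
    sumXAdd D σ (Finsupp.single n x) =
      ∑ h, Finsupp.single (n + Finsupp.single h 1) x + Finsupp.single n (D x) := by
  simp [sumXAdd]

lemma mapDomain_add_single_apply {σ : Type*} (h : σ) (Q : (σ →₀ ℕ) →₀ V) (n : σ →₀ ℕ) :
    Finsupp.mapDomain (· + Finsupp.single h 1) Q n =
      if 1 ≤ n h then Q (n - Finsupp.single h 1) else 0 := by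
  split_ifs with hn
  · obtain ⟨n, rfl⟩ := exists_add_of_le (Finsupp.single_le_iff.2 hn)
    rw [add_comm, add_tsub_cancel_right]
    exact Finsupp.mapDomain_apply (add_left_injective _) Q n
  · refine Finsupp.mapDomain_of_notMem_range _ _ ?_
    rintro ⟨n, rfl⟩
    simp at hn

lemma sumXAdd_apply {σ : Type*} [Fintype σ] [DecidableEq σ] (Q : (σ →₀ ℕ) →₀ V) (n : σ → ℕ) :
    sumXAdd D σ Q (Finsupp.equivFunOnFinite.symm n) =
      sumXAddCoeff D (Q ∘ Finsupp.equivFunOnFinite.symm) n := by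
  have hpred (h : σ) : Finsupp.equivFunOnFinite.symm n - Finsupp.single h 1 =
      Finsupp.equivFunOnFinite.symm (Function.update n h (n h - 1)) := by
    ext j
    obtain rfl | hj := eq_or_ne j h <;> simp [*]
  simp [sumXAdd, sumXAddCoeff, mapDomain_add_single_apply, hpred, add_comm]

variable (R) in
/-- The map `Q ↦ λ_0 ^ a Q` from polynomials in `λ_1,…,λ_k` to polynomials in `λ_0,…,λ_k`. -/
noncomputable def powXMul (a : ℕ) : ((Fin k →₀ ℕ) →₀ V) →ₗ[R] ((Fin (k + 1) →₀ ℕ) →₀ V) :=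
  Finsupp.lmapDomain V R (Finsupp.cons a)

lemma powXMul_zero_single_tail (n : Fin (k + 1) →₀ ℕ) (x : V) :
    powXMul R (n 0) (Finsupp.single n.tail x) = Finsupp.single n x := by
  simp [powXMul]

lemma sumXAdd_powXMul (a : ℕ) (Q : (Fin k →₀ ℕ) →₀ V) :
    sumXAdd D (Fin (k + 1)) (powXMul R a Q) =
      powXMul R (a + 1) Q + powXMul R a (sumXAdd D (Fin k) Q) := by
  induction Q using Finsupp.induction_linear with
  | zero => simp
  | add P Q hP hQ => simp only [map_add, hP, hQ]; abel
  | single t x =>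
    have hzero : t.cons a + Finsupp.single 0 1 = t.cons (a + 1) := by
      ext j; cases j using Fin.cases <;> simp
    have hsucc (b : Fin k) :
        t.cons a + Finsupp.single b.succ 1 = (t + Finsupp.single b 1).cons a := by
      ext j; cases j using Fin.cases <;> simp [Finsupp.single_apply]
    simp [powXMul, sumXAdd_single, Fin.sum_univ_succ, hzero, hsucc, add_assoc,
      Finsupp.mapDomain_add, Finsupp.mapDomain_finsetSum]

end Operators

section Substitution

variable {R V : Type*} [Semiring R] [AddCommGroup V] [Module R V] (D : V →ₗ[R] V) {k : ℕ}

/-- The substitution of `-(λ_1 + ⋯ + λ_k) - ∂̂`, that is of `Λ₀`, for `λ_0` in a polynomial in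
`λ_0,…,λ_k`; powers of `λ_0` are written to the left of the other variables. -/
noncomputable def substX (k : ℕ) : ((Fin (k + 1) →₀ ℕ) →₀ V) →ₗ[R] ((Fin k →₀ ℕ) →₀ V) :=
  Finsupp.lsum ℕ fun n => ((-sumXAdd D (Fin k)) ^ n 0) ∘ₗ Finsupp.lsingle n.tail

lemma substX_single (n : Fin (k + 1) →₀ ℕ) (x : V) :
    substX D k (Finsupp.single n x) =
      ((-sumXAdd D (Fin k)) ^ n 0) (Finsupp.single n.tail x) := by
  simp [substX]

lemma substX_powXMul (a : ℕ) (Q : (Fin k →₀ ℕ) →₀ V) :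
    substX D k (powXMul R a Q) = ((-sumXAdd D (Fin k)) ^ a) Q := by
  induction Q using Finsupp.induction_linear with
  | zero => simp
  | add P Q hP hQ => simp [hP, hQ]
  | single t x => simp [substX_single, powXMul]

lemma powXMul_sub_mem_range (a : ℕ) (Q : (Fin k →₀ ℕ) →₀ V) :
    powXMul R a Q - powXMul R 0 (((-sumXAdd D (Fin k)) ^ a) Q) ∈
      LinearMap.range (sumXAdd D (Fin (k + 1))) := by
  induction a generalizing Q with
  | zero => simp
  | succ a ih =>
    have hstep : powXMul R (a + 1) Q =
        sumXAdd D (Fin (k + 1)) (powXMul R a Q) +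
          powXMul R a ((-sumXAdd D (Fin k)) Q) := by
      simp [sumXAdd_powXMul]
    rw [hstep, pow_succ, Module.End.mul_apply, add_sub_assoc]
    exact add_mem (LinearMap.mem_range_self _ _) (ih _)

lemma sub_powXMul_substX_mem_range (P : (Fin (k + 1) →₀ ℕ) →₀ V) :
    P - powXMul R 0 (substX D k P) ∈ LinearMap.range (sumXAdd D (Fin (k + 1))) := by
  induction P using Finsupp.induction_linear with
  | zero => simp
  | add P Q hP hQ =>
    rw [map_add, map_add, add_sub_add_comm]
    exact add_mem hP hQ
  | single n x =>
    rw [← powXMul_zero_single_tail (R := R), substX_powXMul]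
    exact powXMul_sub_mem_range D _ _

lemma substX_sumXAdd (Q : (Fin (k + 1) →₀ ℕ) →₀ V) :
    substX D k (sumXAdd D (Fin (k + 1)) Q) = 0 := by
  induction Q using Finsupp.induction_linear with
  | zero => simp
  | add P Q hP hQ => simp [hP, hQ]
  | single n x =>
    rw [← powXMul_zero_single_tail (R := R), sumXAdd_powXMul, map_add, substX_powXMul,
      substX_powXMul, pow_succ, Module.End.mul_apply, LinearMap.neg_apply, map_neg, neg_add_cancel]

theorem ker_substX : LinearMap.ker (substX D k) = LinearMap.range (sumXAdd D (Fin (k + 1))) := by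
  ext P
  refine ⟨fun hP => ?_, ?_⟩
  · simpa [LinearMap.mem_ker.1 hP] using sub_powXMul_substX_mem_range D P
  · rintro ⟨Q, rfl⟩
    exact substX_sumXAdd D Q

end Substitution

section GapOnePolynomial

variable {V : Type*} [AddCommMonoid V] {k N : ℕ} {v : (Fin (k + 1) → ℕ) → V}

variable (N v) in
open scoped Classical in
/-- The polynomial `∑ λ_0^{m_0} ⋯ λ_k^{m_k} ⊗ v_m`, the sum ranging over the tuples
`m ∈ {0,…,N}^{k+1}` with `μ_0 - μ_1 = 1`. -/
noncomputable def gapOnePolynomial : (Fin (k + 1) →₀ ℕ) →₀ V :=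
  ∑ m : Fin (k + 1) → Fin (N + 1), if gapOne k (fun j => (m j : ℕ)) then
    Finsupp.single (Finsupp.equivFunOnFinite.symm fun j => (m j : ℕ)) (v fun j => m j) else 0

lemma gapOnePolynomial_apply (n : Fin (k + 1) → ℕ) :
    gapOnePolynomial N v (Finsupp.equivFunOnFinite.symm n) = gapOneCoeff N v n := by
  classical
  rw [gapOnePolynomial, Finsupp.finsetSum_apply]
  by_cases hn : ∀ j, n j ≤ N
  · let m (j : Fin (k + 1)) : Fin (N + 1) := ⟨n j, Nat.lt_succ_of_le (hn j)⟩
    have hm : (fun j => (m j : ℕ)) = n := rfl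
    rw [Finset.sum_eq_single m]
    · by_cases hg : gapOne k n <;> simp [gapOneCoeff, hm, hn, hg]
    · intro m' _ hne
      split_ifs
      · refine Finsupp.single_eq_of_ne fun h => hne ?_
        funext j
        exact Fin.ext (congrFun (Finsupp.equivFunOnFinite.symm.injective h.symm) j)
      · rfl
    · simp
  · rw [gapOneCoeff, if_neg fun h => hn h.2]
    refine Finset.sum_eq_zero fun m _ => ?_
    split_ifs
    · refine Finsupp.single_eq_of_ne fun h => hn fun j => ?_
      rw [Finsupp.equivFunOnFinite.symm.injective h]
      exact Nat.le_of_lt_succ (m j).isLt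
    · rfl

end GapOnePolynomial

section Equation

variable {C V : Type*} [Field C] [AddCommGroup V] [Module C V] {D : V →ₗ[C] V} {k N : ℕ}
  {v : (Fin (k + 1) → ℕ) → V}

lemma coe_neg_sumXAdd : ⇑(-sumXAdd D (Fin k)) = vLamZero D k := by
  funext Q
  simp [sumXAdd, vLamZero, sub_eq_add_neg, add_comm]

lemma substX_gapOnePolynomial : substX D k (gapOnePolynomial N v) = eqnLHS D k N v := by
  rw [gapOnePolynomial, map_sum, eqnLHS]
  refine Finset.sum_congr rfl fun m _ => ?_
  rw [apply_ite (substX D k), map_zero, substX_single, Module.End.pow_apply, coe_neg_sumXAdd]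
  rfl

theorem eqnLHS_eq_zero_iff :
    eqnLHS D k N v = 0 ↔ ∃ q : (Fin (k + 1) → ℕ) → V, q.support.Finite ∧
      ∀ n, sumXAddCoeff D q n = gapOneCoeff N v n := by
  rw [← substX_gapOnePolynomial, ← LinearMap.mem_ker, ker_substX]
  constructor
  · rintro ⟨Q, hQ⟩
    exact ⟨Q ∘ Finsupp.equivFunOnFinite.symm,
      Q.hasFiniteSupport.preimage Finsupp.equivFunOnFinite.symm.injective.injOn,
      fun n => by rw [← sumXAdd_apply, hQ, gapOnePolynomial_apply]⟩
  · rintro ⟨q, hq, hqv⟩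
    let Q : (Fin (k + 1) →₀ ℕ) →₀ V :=
      Finsupp.ofSupportFinite (q ∘ Finsupp.equivFunOnFinite)
        (hq.preimage Finsupp.equivFunOnFinite.injective.injOn)
    refine ⟨Q, Finsupp.ext fun n => ?_⟩
    obtain ⟨n, rfl⟩ := Finsupp.equivFunOnFinite.symm.surjective n
    rw [sumXAdd_apply, gapOnePolynomial_apply, ← hqv]
    rfl

end Equation

open scoped Classical in
theorem stmt_14_general (C V : Type*) [Field C] [AddCommGroup V] [Module C V]
    (D : V →ₗ[C] V) (k N : ℕ) (hk : 1 ≤ k)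
    (v : (Fin (k + 1) → ℕ) → V) :
    (eqnLHS D k N v = 0 ↔
      ((∀ m : Fin (k + 1) → ℕ, (∀ j, m j ≤ N) → gapOne k m →
          ∀ i j : Fin (k + 1), (∀ r, m r ≤ m i) → m i = m j + 1 →
            v (fun a => m (Equiv.swap i j a)) = v m) ∧
       ∃ w : (Fin (k + 1) → ℕ) → V,
         (∀ m : Fin (k + 1) → ℕ, (∀ j, m j < N) → twoMaxEq k m →
            ∀ i : Fin (k + 1), (∀ r, m r ≤ m i) →
              w m = v (Function.update m i (m i + 1))) ∧
         (∀ m : Fin (k + 1) → ℕ, (∀ j, m j < N) → twoMaxEq k m →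
            D (w m) + ∑ h : Fin (k + 1),
              (if 1 ≤ m h ∧ twoMaxEq k (Function.update m h (m h - 1))
               then w (Function.update m h (m h - 1)) else 0) = 0))) ∧
    (Function.Injective D → eqnLHS D k N v = 0 →
      ∀ m : Fin (k + 1) → ℕ, (∀ j, m j ≤ N) → gapOne k m → v m = 0) := by
  obtain ⟨k, rfl⟩ := Nat.exists_eq_add_of_le' hk
  have hiff := (eqnLHS_eq_zero_iff (D := D) (N := N) (v := v)).trans
    exists_finite_support_sumXAddCoeff_eq_iff
  refine ⟨?_, fun hD h m hN hm => ?_⟩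
  · rw [hiff]
    constructor
    · rintro ⟨w, hw, h0⟩
      refine ⟨fun m hN hm i j => hw.apply_comp_swap_eq hN hm, w, hw, fun n hN hn => ?_⟩
      rw [← sumXAddCoeff_twoMaxCoeff_of_forall_lt hn hN, h0 n hN hn]
    · rintro ⟨-, w, hw, h0⟩
      refine ⟨w, hw, fun n hN hn => ?_⟩
      rw [sumXAddCoeff_twoMaxCoeff_of_forall_lt hn hN, h0 n hN hn]
  · obtain ⟨w, hw, h0⟩ := hiff.1 h
    exact hw.eq_zero_of_injective h0 hD hN hm

open scoped Classical in
/-- Let `C` be a field of characteristic zero, `V` a `C`-vector space, `∂ = D` a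
`C`-linear endomorphism of `V`, and `k, N ≥ 1`.  For elements `v_{m_0,…,m_k} ∈ V`
indexed by the tuples in `{0,…,N}^{k+1}` whose non-increasing rearrangement satisfies
`μ_0 − μ_1 = 1`, the equation
`Σ_m Λ₀^{m_0}(λ_1^{m_1}⋯λ_k^{m_k} ⊗ v_m) = 0` holds in `C[λ_1,…,λ_k] ⊗_C V` iff:
(i) `v` is invariant under transposing a maximal entry with a second-maximal entry; and
(ii) setting `w_n := v_{n + e_i}` for any maximal entry position `i` of a tuple
`n ∈ {0,…,N−1}^{k+1}` whose two largest entries are equal, one has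
`D(w_n) + Σ_h w_{n − e_h} = 0`, the summand being `0` unless `n_h ≥ 1` and the two
largest entries of `n − e_h` are equal.
In particular, if `D` is injective, the equation has only the zero solution. -/
theorem stmt_14 (C V : Type*) [Field C] [CharZero C] [AddCommGroup V] [Module C V]
    (D : V →ₗ[C] V) (k N : ℕ) (hk : 1 ≤ k) (hN : 1 ≤ N)
    (v : (Fin (k + 1) → ℕ) → V) :
    (eqnLHS D k N v = 0 ↔
      ((∀ m : Fin (k + 1) → ℕ, (∀ j, m j ≤ N) → gapOne k m →
          ∀ i j : Fin (k + 1), (∀ r, m r ≤ m i) → m i = m j + 1 →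
            v (fun a => m (Equiv.swap i j a)) = v m) ∧
       ∃ w : (Fin (k + 1) → ℕ) → V,
         (∀ m : Fin (k + 1) → ℕ, (∀ j, m j < N) → twoMaxEq k m →
            ∀ i : Fin (k + 1), (∀ r, m r ≤ m i) →
              w m = v (Function.update m i (m i + 1))) ∧
         (∀ m : Fin (k + 1) → ℕ, (∀ j, m j < N) → twoMaxEq k m →
            D (w m) + ∑ h : Fin (k + 1),
              (if 1 ≤ m h ∧ twoMaxEq k (Function.update m h (m h - 1))
               then w (Function.update m h (m h - 1)) else 0) = 0))) ∧
    (Function.Injective D → eqnLHS D k N v = 0 →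
      ∀ m : Fin (k + 1) → ℕ, (∀ j, m j ≤ N) → gapOne k m → v m = 0) :=
  stmt_14_general C V D k N hk v
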